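/- Let α : [0,∞) → [1,∞) and β : [0,∞) → [0,1) be such that there is a bounded function γ : (0,1] → [0,∞) with lim_{s→0⁺} γ(s) = 0 such that p(s) = s − (1−s)·γ(s) is essentially positive on (0,1] and α(t) ≤ 1 + γ(1−β(t)) for all t ≥ 0. Then for every ε > 0 there exists Q_ε < 1 such that α(t)·β(t) ≤ Q_ε for every t ≥ 0 with α(t) ≥ 1 + ε. -/

import Mathlib

/-!
The identity `p (1 - b) = 1 - (1 + γ (1 - b)) * b` turns the bound `α ≤ 1 + γ (1 - β)` into
`α * β ≤ 1 - p (1 - β)`. If `1 + ε ≤ α t`, then `ε ≤ γ (1 - β t)`, so the limit of `γ` at `0` keeps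
`1 - β t` away from `0`, and there essential positivity bounds `p` below by a positive constant.
-/

open Filter Topology

/-- `h` is essentially positive on `S ⊆ (0, ∞)`: it has a positive infimum over `{s ∈ S | a ≤ s}`
for every `a > 0`. The infimum is encoded by a positive lower bound, so that an empty
`{s ∈ S | a ≤ s}` imposes no condition. -/
def EssentiallyPositiveOn (h : ℝ → ℝ) (S : Set ℝ) : Prop :=
  ∀ a > (0 : ℝ), ∃ m > (0 : ℝ), ∀ s ∈ S, a ≤ s → m ≤ h s

theorem exists_pos_forall_le_dist_of_tendsto_nhdsWithin {X Y : Type*} [PseudoMetricSpace X]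
    [TopologicalSpace Y] [LinearOrder Y] [ClosedIciTopology Y] {f : X → Y} {S : Set X} {x : X}
    {y c : Y} (hf : Tendsto f (𝓝[S] x) (𝓝 y)) (hc : y < c) :
    ∃ δ > 0, ∀ s ∈ S, c ≤ f s → δ ≤ dist s x := by
  obtain ⟨δ, hδ, hlt⟩ := Metric.mem_nhdsWithin_iff.mp (hf.eventually_lt_const hc)
  refine ⟨δ, hδ, fun s hs hcs => ?_⟩
  by_contra! hsδ
  exact (hlt ⟨hsδ, hs⟩).not_ge hcs

theorem product_bound_where_alpha_large_general {ι : Type*} {T : Set ι} {α β : ι → ℝ} {γ : ℝ → ℝ}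
    (hβ : ∀ t ∈ T, β t ∈ Set.Ico (0 : ℝ) 1)
    (hγ : Tendsto γ (𝓝[Set.Ioc 0 1] 0) (𝓝 0))
    (hp : EssentiallyPositiveOn (fun s => s - (1 - s) * γ s) (Set.Ioc 0 1))
    (hαγ : ∀ t ∈ T, α t ≤ 1 + γ (1 - β t)) {ε : ℝ} (hε : 0 < ε) :
    ∃ Q < 1, ∀ t ∈ T, 1 + ε ≤ α t → α t * β t ≤ Q := by
  obtain ⟨δ, hδ, hδ_le⟩ := exists_pos_forall_le_dist_of_tendsto_nhdsWithin hγ hε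
  obtain ⟨m, hm, hm_le⟩ := hp δ hδ
  refine ⟨1 - m, sub_lt_self 1 hm, fun t ht hεα => ?_⟩
  obtain ⟨hβ_nonneg, hβ_lt⟩ := hβ t ht
  have hmem : 1 - β t ∈ Set.Ioc (0 : ℝ) 1 := ⟨sub_pos.mpr hβ_lt, sub_le_self 1 hβ_nonneg⟩
  have hεγ : ε ≤ γ (1 - β t) := le_of_add_le_add_left (hεα.trans (hαγ t ht))
  have hδβ : δ ≤ 1 - β t := by
    simpa only [Real.dist_eq, sub_zero, abs_of_pos hmem.1] using hδ_le _ hmem hεγ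
  calc
    α t * β t ≤ (1 + γ (1 - β t)) * β t := mul_le_mul_of_nonneg_right (hαγ t ht) hβ_nonneg
    _ = 1 - ((1 - β t) - (1 - (1 - β t)) * γ (1 - β t)) := by ring
    _ ≤ 1 - m := sub_le_sub_left (hm_le _ hmem hδβ) 1

/-- **Lemma 2.2.** Under the hypotheses of Theorem 1.4 on `α`, `β` and `γ`, for every
`ε > 0` there is `Q_ε < 1` bounding `α t * β t` for all `t ≥ 0` with `α t ≥ 1 + ε`. -/
theorem product_bound_where_alpha_large
    (α β : ℝ → ℝ)
    (hα : ∀ t, 0 ≤ t → 1 ≤ α t)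
    (hβ : ∀ t, 0 ≤ t → β t ∈ Set.Ico (0 : ℝ) 1)
    -- the control function γ
    (γ : ℝ → ℝ)
    (hγnonneg : ∀ s ∈ Set.Ioc (0 : ℝ) 1, 0 ≤ γ s)
    (hγbdd : ∃ M : ℝ, ∀ s ∈ Set.Ioc (0 : ℝ) 1, γ s ≤ M)
    (hγlim : Filter.Tendsto γ (nhdsWithin 0 (Set.Ioc (0 : ℝ) 1)) (nhds 0))
    -- p(s) = s - (1-s)γ(s) is essentially positive on (0,1]
    (hp : ∀ a > (0 : ℝ), ∃ m > (0 : ℝ), ∀ s ∈ Set.Ioc (0 : ℝ) 1, a ≤ s →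
      m ≤ s - (1 - s) * γ s)
    (hαγ : ∀ t, 0 ≤ t → α t ≤ 1 + γ (1 - β t)) :
    ∀ ε > (0 : ℝ), ∃ Q : ℝ, Q < 1 ∧
      ∀ t, 0 ≤ t → 1 + ε ≤ α t → α t * β t ≤ Q :=
  fun _ hε => product_bound_where_alpha_large_general (T := Set.Ici 0) hβ hγlim hp hαγ hε
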